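/- Let T = Trian(A, M, B) be a triangular algebra over R in which A and B have only trivial idempotents, let σ be an automorphism of T given in standard form with data (f, g, m₀, ν), and let D be a generalized σ-derivation of T with associated σ-derivation d. Then there exist: an f-derivation d_A of A (d_A(aa') = d_A(a)a' + f(a)d_A(a')), a g-derivation d_B of B (d_B(bb') = d_B(b)b' + g(b)d_B(b')), an R-linear map ξ : M → M with ξ(a·m) = d_A(a)·m + f(a)·ξ(m) and ξ(m·b) = ξ(m)·b + ν(m)·d_B(b) for all a, m, b; elements m_d, m_D ∈ M; a generalized f-derivation D_A of A with associated f-derivation d_A (D_A(aa') = D_A(a)a' + f(a)d_A(a')); and a generalized g-derivation D_B of B with associated g-derivation d_B (D_B(bb') = D_B(b)b' + g(b)d_B(b')), such that D(a, m, b) = (D_A(a), f(a)·m_d + m_D·b − m₀·d_B(b) + ξ(m) + D_A(1_A)·m, D_B(b)) for all (a, m, b) ∈ T. -/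

import Mathlib

/-!
Triangular algebras `Trian(A, M, B)` realized on the type `A × M × B`, where `A`, `B` are
unital associative `R`-algebras and `M` is an `(A, B)`-bimodule (a left `A`-module and a
right `B`-module, the right action being encoded as a left `Bᵐᵒᵖ`-action, written
`op b • m`, with the two actions commuting), compatible with the `R`-module structure.
-/

set_option linter.unusedSectionVars false

open MulOpposite

variable {R A B M : Type*} [CommRing R] [Ring A] [Ring B]
  [Algebra R A] [Algebra R B]
  [AddCommGroup M] [Module R M]
  [Module A M] [Module Bᵐᵒᵖ M]
  [SMulCommClass A Bᵐᵒᵖ M]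
  [IsScalarTower R A M] [SMulCommClass R A M]
  [IsScalarTower R Bᵐᵒᵖ M] [SMulCommClass R Bᵐᵒᵖ M]

/-- Multiplication of the triangular algebra `Trian(A, M, B)`:
`(a, m, b) * (a', m', b') = (a * a', a • m' + m • b', b * b')`, where the right action of
`B` on `M` is written `op b • m`. -/
instance triMul : Mul (A × M × B) :=
  ⟨fun x y => (x.1 * y.1, x.1 • y.2.1 + op y.2.2 • x.2.1, x.2.2 * y.2.2)⟩

theorem tri_mul_def (x y : A × M × B) :
    x * y = (x.1 * y.1, x.1 • y.2.1 + op y.2.2 • x.2.1, x.2.2 * y.2.2) := rfl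

instance triOne : One (A × M × B) := ⟨(1, 0, 1)⟩

theorem tri_one_def : (1 : A × M × B) = (1, 0, 1) := rfl

/-- The triangular algebra `Trian(A, M, B)` as a ring structure on `A × M × B`. -/
instance triRing : Ring (A × M × B) where
  __ := (inferInstance : AddCommGroup (A × M × B))
  __ := triMul
  __ := triOne
  left_distrib x y z := by
    refine Prod.ext ?_ (Prod.ext ?_ ?_) <;>
      simp [tri_mul_def, mul_add, smul_add, add_smul, Prod.fst_add, Prod.snd_add] <;> abel
  right_distrib x y z := by
    refine Prod.ext ?_ (Prod.ext ?_ ?_) <;>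
      simp [tri_mul_def, add_mul, smul_add, add_smul, Prod.fst_add, Prod.snd_add] <;> abel
  zero_mul x := by
    refine Prod.ext ?_ (Prod.ext ?_ ?_) <;> simp [tri_mul_def]
  mul_zero x := by
    refine Prod.ext ?_ (Prod.ext ?_ ?_) <;> simp [tri_mul_def]
  mul_assoc x y z := by
    refine Prod.ext (mul_assoc _ _ _) (Prod.ext ?_ (mul_assoc _ _ _))
    show (x.1 * y.1) • z.2.1 + op z.2.2 • (x.1 • y.2.1 + op y.2.2 • x.2.1)
        = x.1 • (y.1 • z.2.1 + op z.2.2 • y.2.1) + op (y.2.2 * z.2.2) • x.2.1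
    rw [mul_smul, smul_add, smul_add, op_mul, mul_smul, smul_comm x.1 (op z.2.2)]
    abel
  one_mul x := by
    refine Prod.ext (one_mul _) (Prod.ext ?_ (one_mul _))
    show (1 : A) • x.2.1 + op x.2.2 • (0 : M) = x.2.1
    simp
  mul_one x := by
    refine Prod.ext (mul_one _) (Prod.ext ?_ (mul_one _))
    show x.1 • (0 : M) + op (1 : B) • x.2.1 = x.2.1
    simp

/-- The triangular algebra `Trian(A, M, B)` as an `R`-algebra. -/
instance triAlgebra : Algebra R (A × M × B) :=
  Algebra.ofModule
    (fun r x y => by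
      refine Prod.ext ?_ (Prod.ext ?_ ?_)
      · exact smul_mul_assoc r x.1 y.1
      · show (r • x.1) • y.2.1 + op y.2.2 • (r • x.2.1) = r • (x.1 • y.2.1 + op y.2.2 • x.2.1)
        rw [smul_assoc, smul_add, smul_comm (op y.2.2) r]
      · exact smul_mul_assoc r x.2.2 y.2.2)
    (fun r x y => by
      refine Prod.ext ?_ (Prod.ext ?_ ?_)
      · exact mul_smul_comm r x.1 y.1
      · show x.1 • (r • y.2.1) + op (r • y.2.2) • x.2.1 = r • (x.1 • y.2.1 + op y.2.2 • x.2.1)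
        rw [op_smul, smul_assoc, smul_add, smul_comm x.1 r]
      · exact mul_smul_comm r x.2.2 y.2.2)

/-- Description of generalized σ-derivations of a triangular algebra whose
corner algebras have only trivial idempotents. -/
theorem generalized_sigma_derivation_description
    [Nontrivial M] [FaithfulSMul A M] [FaithfulSMul Bᵐᵒᵖ M]
    (hA : ∀ e : A, e * e = e → e = 0 ∨ e = 1)
    (hB : ∀ e : B, e * e = e → e = 0 ∨ e = 1)
    (f : A ≃ₐ[R] A) (g : B ≃ₐ[R] B) (m₀ : M) (ν : M ≃ₗ[R] M)
    (hν₁ : ∀ (a : A) (m : M), ν (a • m) = f a • ν m)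
    (hν₂ : ∀ (m : M) (b : B), ν (op b • m) = op (g b) • ν m)
    (σ : (A × M × B) ≃ₐ[R] (A × M × B))
    (hσ : ∀ (a : A) (m : M) (b : B),
      σ (a, m, b) = (f a, f a • m₀ - op (g b) • m₀ + ν m, g b))
    (D d : (A × M × B) →ₗ[R] (A × M × B))
    (hd : ∀ x y : A × M × B, d (x * y) = d x * y + σ x * d y)
    (hD : ∀ x y : A × M × B, D (x * y) = D x * y + σ x * d y) :
    ∃ (dA : A →ₗ[R] A) (dB : B →ₗ[R] B) (ξ : M →ₗ[R] M) (m_d m_D : M)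
      (DA : A →ₗ[R] A) (DB : B →ₗ[R] B),
      -- dA is an f-derivation of A
      (∀ a a' : A, dA (a * a') = dA a * a' + f a * dA a') ∧
      -- dB is a g-derivation of B
      (∀ b b' : B, dB (b * b') = dB b * b' + g b * dB b') ∧
      -- compatibility properties of ξ
      (∀ (a : A) (m : M), ξ (a • m) = dA a • m + f a • ξ m) ∧
      (∀ (m : M) (b : B), ξ (op b • m) = op b • ξ m + op (dB b) • ν m) ∧
      -- DA is a generalized f-derivation of A with associated f-derivation dA
      (∀ a a' : A, DA (a * a') = DA a * a' + f a * dA a') ∧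
      -- DB is a generalized g-derivation of B with associated g-derivation dB
      (∀ b b' : B, DB (b * b') = DB b * b' + g b * dB b') ∧
      -- the form of D
      (∀ (a : A) (m : M) (b : B),
        D (a, m, b) = (DA a,
          f a • m_d + op b • m_D - op (dB b) • m₀ + ξ m + DA 1 • m,
          DB b)) := by
  have key : ∀ F : (A × M × B) →ₗ[R] (A × M × B), ∀ a m b,
      F (a, m, b) = F (a, 0, 0) + F (0, m, 0) + F (0, 0, b) := by
    intro F a m b
    rw [← map_add, ← map_add]
    congr 1
    refine Prod.ext ?_ (Prod.ext ?_ ?_) <;> simp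
  -- value of `d` at the first corner idempotent
  have he := hd (1, 0, 0) (1, 0, 0)
  simp only [tri_mul_def, hσ, Prod.ext_iff, Prod.fst_add, Prod.snd_add] at he
  simp at he
  have hq : (d (1, 0, 0)).2.2 = 0 := by tauto
  -- `a`-part
  have ha : ∀ (F : (A × M × B) →ₗ[R] (A × M × B))
      (_ : ∀ x y : A × M × B, F (x * y) = F x * y + σ x * d y) (a : A),
      (F (a, 0, 0)).2.1 = f a • (d (1, 0, 0)).2.1 ∧ (F (a, 0, 0)).2.2 = 0 := by
    intro F hF a
    have h := hF (a, 0, 0) (1, 0, 0)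
    simp only [tri_mul_def, hσ, Prod.ext_iff, Prod.fst_add, Prod.snd_add] at h
    simp [hq] at h
    exact h.2
  -- `b`-part
  have hb : ∀ (F : (A × M × B) →ₗ[R] (A × M × B))
      (_ : ∀ x y : A × M × B, F (x * y) = F x * y + σ x * d y) (b : B),
      (F (0, 0, b)).1 = 0 ∧ (F (0, 0, b)).2.1 =
        op b • (F (0, 0, 1)).2.1 - op (d (0, 0, b)).2.2 • m₀ := by
    intro F hF b
    have h := hF (0, 0, 1) (0, 0, b)
    simp only [tri_mul_def, hσ, Prod.ext_iff, Prod.fst_add, Prod.snd_add] at h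
    simp at h
    refine ⟨h.1, ?_⟩
    rw [h.2.1]
    abel
  -- `m`-part for `d`
  have hm : ∀ m : M, (d (0, m, 0)).1 = 0 ∧ (d (0, m, 0)).2.2 = 0 := by
    intro m
    have h := hd (1, 0, 0) (0, m, 0)
    have h' := hd (0, m, 0) (0, 0, 1)
    simp only [tri_mul_def, hσ, Prod.ext_iff, Prod.fst_add, Prod.snd_add] at h h'
    simp at h h'
    exact ⟨h'.1, h.2⟩
  have hmD : ∀ m : M, D (0, m, 0) = (0, (d (0, m, 0)).2.1 + (D (1, 0, 0)).1 • m, 0) := by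
    intro m
    have h := hD (1, 0, 0) (0, m, 0)
    simp only [tri_mul_def, hσ, Prod.ext_iff, Prod.fst_add, Prod.snd_add] at h
    simp [hm] at h
    refine Prod.ext h.1 (Prod.ext ?_ h.2.2)
    rw [h.2.1]
    exact add_comm _ _
  let pA : ((A × M × B) →ₗ[R] (A × M × B)) → (A →ₗ[R] A) := fun F =>
    { toFun := fun a => (F (a, 0, 0)).1
      map_add' := fun x y => by
        rw [← Prod.fst_add, ← map_add]; simp
      map_smul' := fun r x => by
        have : ((r • x, 0, 0) : A × M × B) = r • (x, 0, 0) := by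
          refine Prod.ext rfl (Prod.ext ?_ ?_) <;> simp
        rw [this, map_smul]; rfl }
  let pB : ((A × M × B) →ₗ[R] (A × M × B)) → (B →ₗ[R] B) := fun F =>
    { toFun := fun a => (F (0, 0, a)).2.2
      map_add' := fun x y => by
        rw [← Prod.snd_add, ← Prod.snd_add, ← map_add]; simp
      map_smul' := fun r x => by
        have : ((0, 0, r • x) : A × M × B) = r • (0, 0, x) := by
          refine Prod.ext ?_ (Prod.ext ?_ rfl) <;> simp
        rw [this, map_smul]; rfl }
  let pM : ((A × M × B) →ₗ[R] (A × M × B)) → (M →ₗ[R] M) := fun F =>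
    { toFun := fun a => (F (0, a, 0)).2.1
      map_add' := fun x y => by
        rw [← Prod.fst_add, ← Prod.snd_add, ← map_add]; simp
      map_smul' := fun r x => by
        have : ((0, r • x, 0) : A × M × B) = r • (0, x, 0) := by
          refine Prod.ext ?_ (Prod.ext rfl ?_) <;> simp
        rw [this, map_smul]; rfl }
  have gA : ∀ (F : (A × M × B) →ₗ[R] (A × M × B))
      (_ : ∀ x y : A × M × B, F (x * y) = F x * y + σ x * d y) (a a' : A),
      pA F (a * a') = pA F a * a' + f a * pA d a' := by
    intro F hF a a'
    have h := hF (a, 0, 0) (a', 0, 0)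
    simp only [tri_mul_def, hσ, Prod.ext_iff, Prod.fst_add, Prod.snd_add] at h
    simp at h
    exact h.1
  have gB : ∀ (F : (A × M × B) →ₗ[R] (A × M × B))
      (_ : ∀ x y : A × M × B, F (x * y) = F x * y + σ x * d y) (a a' : B),
      pB F (a * a') = pB F a * a' + g a * pB d a' := by
    intro F hF a a'
    have h := hF (0, 0, a) (0, 0, a')
    simp only [tri_mul_def, hσ, Prod.ext_iff, Prod.fst_add, Prod.snd_add] at h
    simp at h
    exact h.2.2
  refine ⟨pA d, pB d, pM d, (d (1, 0, 0)).2.1, (D (0, 0, 1)).2.1, pA D, pB D,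
    gA d hd, gB d hd, ?_, ?_, gA D hD, gB D hD, ?_⟩
  · intro a m
    have h := hd (a, 0, 0) (0, m, 0)
    simp only [tri_mul_def, hσ, Prod.ext_iff, Prod.fst_add, Prod.snd_add] at h
    simp [hm] at h
    exact h
  · intro m b
    have h := hd (0, m, 0) (0, 0, b)
    simp only [tri_mul_def, hσ, Prod.ext_iff, Prod.fst_add, Prod.snd_add] at h
    simp [hm] at h
    exact h
  · intro a m b
    have h1 := ha D hD a
    have h2 := hb D hD b
    rw [key D, hmD m]
    refine Prod.ext ?_ (Prod.ext ?_ ?_)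
    · simp [h2.1, pA]
    · simp only [Prod.fst_add, Prod.snd_add, h1.1, h2.2]
      simp only [pA, pB, pM, LinearMap.coe_mk, AddHom.coe_mk]
      abel
    · simp [h1.2, pB]
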